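/- Let k be an integral domain, W a set, V = W →₀ k the free k-module with basis W, and Π a simple terminating term-rewriting system on V with respect to W. Suppose ≤ is a well-order on W compatible with Π. Then Π is confluent if and only if every basis element w ∈ W (regarded as the element 1·w of V) is locally confluent. -/

import Mathlib

/-- A term-rewriting system `Rw ⊆ W × (W →₀ k)` is simple if for every rule
`t → v`, the basis element `t` does not occur in the support of `v`. -/
def IsSimpleTRS {k W : Type*} [CommRing k] [IsDomain k]
    (Rw : W → (W →₀ k) → Prop) : Prop :=
  ∀ t v, Rw t v → t ∉ v.support

/-- One-step rewriting: `f →_Π g` if there is a rule `t → v` such that the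
coefficient of `t` in `f` is nonzero and `g = f - (f t)·t + (f t)·v`. -/
def OneStep {k W : Type*} [CommRing k] [IsDomain k]
    (Rw : W → (W →₀ k) → Prop) (f g : W →₀ k) : Prop :=
  ∃ t v, Rw t v ∧ f t ≠ 0 ∧ g = f - Finsupp.single t (f t) + f t • v

/-- `f` and `g` are joinable: both rewrite to a common element. -/
def Joinable {k W : Type*} [CommRing k] [IsDomain k]
    (Rw : W → (W →₀ k) → Prop) (f g : W →₀ k) : Prop :=
  ∃ u, Relation.ReflTransGen (OneStep Rw) f u ∧
    Relation.ReflTransGen (OneStep Rw) g u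

/-!
Compatibility with a well-founded order makes rewriting terminating, so each basis element `w`
rewrites to some normal form `N w`. Extend `N` linearly. The extension fixes normal forms, so
confluence follows once it is shown to be constant along rewriting, i.e. to identify the two sides
of every rule `t → v`. This goes by induction on `t`: a first step `t → v'` of a reduction of `t` to
`N t` has `N t` as the value of the extension at `v'`, and local confluence at `t` joins `v` and
`v'` by reductions that only involve rules below `t`.
-/

open Relation (ReflTransGen)

/-- Compatibility of an order on `W` with a term-rewriting system: every rule replaces a basis
element by a combination of strictly smaller ones. Only `<` enters the definition, so it also covers
orders that are not linear. -/
def IsCompatibleTRS {k W : Type*} [Zero k] [LT W] (Rw : W → (W →₀ k) → Prop) : Prop :=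
  ∀ t v, Rw t v → ∀ s ∈ v.support, s < t

/-- A normal form of a rewriting system: a vector to which no rule applies. -/
def IsNormalForm {k W : Type*} [CommRing k] [IsDomain k]
    (Rw : W → (W →₀ k) → Prop) (f : W →₀ k) : Prop :=
  ∀ g, ¬ OneStep Rw f g

section Rewriting

variable {k W : Type*} [CommRing k] [IsDomain k] {Rw : W → (W →₀ k) → Prop}

theorem oneStep_single_one_iff {t : W} {g : W →₀ k} :
    OneStep Rw (Finsupp.single t 1) g ↔ Rw t g := by
  constructor
  · rintro ⟨s, v, hsv, hs, rfl⟩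
    obtain rfl : t = s := by
      by_contra hts
      exact hs (Finsupp.single_eq_of_ne' hts)
    simpa using hsv
  · intro h
    exact ⟨t, g, h, by simp, by simp⟩

theorem isNormalForm_iff {f : W →₀ k} :
    IsNormalForm Rw f ↔ ∀ t ∈ f.support, ∀ v, ¬ Rw t v := by
  constructor
  · intro hf t ht v hv
    exact hf _ ⟨t, v, hv, Finsupp.mem_support_iff.1 ht, rfl⟩
  · rintro hf g ⟨t, v, hv, ht, -⟩
    exact hf t (Finsupp.mem_support_iff.2 ht) v hv

end Rewriting

section Termination

variable {k W : Type*} [CommRing k] [IsDomain k] [Preorder W] {Rw : W → (W →₀ k) → Prop}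

theorem OneStep.isDershowitzMannaLT_support (hcompat : IsCompatibleTRS Rw) {f g : W →₀ k}
    (hfg : OneStep Rw f g) :
    Multiset.IsDershowitzMannaLT g.support.val f.support.val := by
  classical
  obtain ⟨t, v, hv, ht, rfl⟩ := hfg
  set g := f - Finsupp.single t (f t) + f t • v with hg
  have hvt : v t = 0 := Finsupp.notMem_support_iff.1 fun h ↦ (hcompat t v hv t h).false
  have t_mem : t ∈ f.support \ g.support := by
    simp [hg, ht, hvt]
  have lt_of_new : ∀ s ∈ g.support \ f.support, s < t := by
    intro s hs
    obtain ⟨hgs, hfs⟩ : g s ≠ 0 ∧ f s = 0 := by simpa using hs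
    have hst : s ≠ t := by
      rintro rfl
      exact ht hfs
    refine hcompat t v hv s (Finsupp.mem_support_iff.2 fun hvs ↦ hgs ?_)
    simp [hg, hfs, hvs, Finsupp.single_eq_of_ne hst]
  refine ⟨(f.support ∩ g.support).val, (g.support \ f.support).val, (f.support \ g.support).val,
    ne_of_mem_of_not_mem' t_mem (Multiset.notMem_zero t), ?_, ?_,
    fun s hs ↦ ⟨t, t_mem, lt_of_new s hs⟩⟩
  · rw [Finset.inter_comm, Finset.inter_val, Finset.sdiff_val, add_comm, Multiset.sub_add_inter]
  · rw [Finset.inter_val, Finset.sdiff_val, add_comm, Multiset.sub_add_inter]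

theorem wellFounded_flip_oneStep [WellFoundedLT W] (hcompat : IsCompatibleTRS Rw) :
    WellFounded (flip (OneStep Rw)) :=
  Subrelation.wf (OneStep.isDershowitzMannaLT_support hcompat)
    (InvImage.wf (fun f : W →₀ k ↦ f.support.val) Multiset.wellFounded_isDershowitzMannaLT)

theorem exists_isNormalForm_reflTransGen [WellFoundedLT W] (hcompat : IsCompatibleTRS Rw)
    (f : W →₀ k) : ∃ g, ReflTransGen (OneStep Rw) f g ∧ IsNormalForm Rw g := by
  obtain ⟨g, hfg, hmin⟩ :=
    (wellFounded_flip_oneStep hcompat).has_min {g | ReflTransGen (OneStep Rw) f g} ⟨f, .refl⟩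
  exact ⟨g, hfg, fun h hgh ↦ hmin h (hfg.tail hgh) hgh⟩

end Termination

section Invariants

variable {k W M : Type*} [CommRing k] [IsDomain k] [AddCommGroup M] [Module k M]
  {Rw : W → (W →₀ k) → Prop} {S : Set W}

theorem OneStep.mem_supported (hS : ∀ t ∈ S, ∀ v, Rw t v → v ∈ Finsupp.supported k k S)
    {f g : W →₀ k} (hf : f ∈ Finsupp.supported k k S) (hfg : OneStep Rw f g) :
    g ∈ Finsupp.supported k k S := by
  obtain ⟨t, v, hv, ht, rfl⟩ := hfg
  have htS : t ∈ S := hf (Finsupp.mem_support_iff.2 ht)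
  exact add_mem (sub_mem hf (Finsupp.single_mem_supported k _ htS))
    (Submodule.smul_mem _ _ (hS t htS v hv))

theorem OneStep.map_eq {L : (W →₀ k) →ₗ[k] M}
    (hL : ∀ t ∈ S, ∀ v, Rw t v → L (Finsupp.single t 1) = L v)
    {f g : W →₀ k} (hf : f ∈ Finsupp.supported k k S) (hfg : OneStep Rw f g) : L f = L g := by
  obtain ⟨t, v, hv, ht, rfl⟩ := hfg
  have htv := hL t (hf (Finsupp.mem_support_iff.2 ht)) v hv
  have hsingle : L (Finsupp.single t (f t)) = f t • L v := by
    rw [← htv, ← map_smul, Finsupp.smul_single_one]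
  rw [map_add, map_sub, hsingle, map_smul, sub_add_cancel]

theorem map_eq_of_reflTransGen_oneStep {L : (W →₀ k) →ₗ[k] M}
    (hS : ∀ t ∈ S, ∀ v, Rw t v → v ∈ Finsupp.supported k k S)
    (hL : ∀ t ∈ S, ∀ v, Rw t v → L (Finsupp.single t 1) = L v)
    {f g : W →₀ k} (hf : f ∈ Finsupp.supported k k S) (hfg : ReflTransGen (OneStep Rw) f g) :
    L f = L g := by
  induction hfg using ReflTransGen.head_induction_on with
  | refl => rfl
  | head hstep _ ih => exact (hstep.map_eq hL hf).trans (ih (hstep.mem_supported hS hf))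

end Invariants

section NormalForms

variable {k W : Type*} [CommRing k] [IsDomain k] {Rw : W → (W →₀ k) → Prop} {N : W → (W →₀ k)}

theorem IsNormalForm.linearCombination_eq_self
    (hN : ∀ w, ReflTransGen (OneStep Rw) (Finsupp.single w 1) (N w))
    {f : W →₀ k} (hf : IsNormalForm Rw f) : Finsupp.linearCombination k N f = f := by
  have hN_support : ∀ w ∈ f.support, N w = Finsupp.single w 1 := by
    intro w hw
    have hw_nf : IsNormalForm Rw (Finsupp.single w 1) := fun v hv ↦
      isNormalForm_iff.1 hf w hw v (oneStep_single_one_iff.1 hv)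
    exact (Relation.reflTransGen_iff_eq hw_nf).1 (hN w)
  calc Finsupp.linearCombination k N f
      = f.sum fun w c ↦ c • N w := Finsupp.linearCombination_apply k f
    _ = f.sum fun w c ↦ c • Finsupp.single w 1 :=
        Finsupp.sum_congr fun w hw ↦ by rw [hN_support w hw]
    _ = f := by simp only [Finsupp.smul_single_one, Finsupp.sum_single]

theorem linearCombination_single_eq_of_rule [Preorder W] [WellFoundedLT W]
    (hcompat : IsCompatibleTRS Rw)
    (hloc : ∀ w g h, OneStep Rw (Finsupp.single w 1) g → OneStep Rw (Finsupp.single w 1) h →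
      Joinable Rw g h)
    (hN : ∀ w, ReflTransGen (OneStep Rw) (Finsupp.single w 1) (N w))
    (hN_nf : ∀ w, IsNormalForm Rw (N w)) {t : W} {v : W →₀ k} (hv : Rw t v) :
    Finsupp.linearCombination k N (Finsupp.single t 1) = Finsupp.linearCombination k N v := by
  induction t using WellFoundedLT.induction generalizing v with
  | ind t ih =>
    set L := Finsupp.linearCombination k N
    have hbelow : ∀ u, Rw t u → u ∈ Finsupp.supported k k (Set.Iio t) := hcompat t
    have L_eq : ∀ u u', Rw t u → ReflTransGen (OneStep Rw) u u' → L u = L u' := fun u u' hu ↦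
      map_eq_of_reflTransGen_oneStep
        (fun s hs w hw r hr ↦ (hcompat s w hw r hr).trans hs)
        (fun s hs w hw ↦ ih s hs hw) (hbelow u hu)
    rcases (hN t).cases_head with hNt | ⟨v', hstep, hv'N⟩
    · have ht_nf : IsNormalForm Rw (Finsupp.single t 1) := hNt ▸ hN_nf t
      exact absurd (oneStep_single_one_iff.2 hv) (ht_nf v)
    · have hv' : Rw t v' := oneStep_single_one_iff.1 hstep
      obtain ⟨u, hvu, hv'u⟩ := hloc t v v' (oneStep_single_one_iff.2 hv) hstep
      calc L (Finsupp.single t 1)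
          = N t := by simp only [L, Finsupp.linearCombination_single, one_smul]
        _ = L (N t) := ((hN_nf t).linearCombination_eq_self hN).symm
        _ = L v' := (L_eq v' (N t) hv' hv'N).symm
        _ = L u := L_eq v' u hv' hv'u
        _ = L v := (L_eq v u hv hvu).symm

end NormalForms

theorem confluent_iff_basis_locally_confluent_general
    {k W : Type*} [CommRing k] [IsDomain k] [Preorder W] [WellFoundedLT W]
    (Rw : W → (W →₀ k) → Prop) (hcompat : IsCompatibleTRS Rw) :
    (∀ f g h : W →₀ k, ReflTransGen (OneStep Rw) f g →
        ReflTransGen (OneStep Rw) f h → Joinable Rw g h) ↔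
    (∀ w : W, ∀ g h : W →₀ k, OneStep Rw (Finsupp.single w 1) g →
        OneStep Rw (Finsupp.single w 1) h → Joinable Rw g h) := by
  refine ⟨fun hconf w g h hg hh ↦ hconf _ g h (.single hg) (.single hh),
    fun hloc f g h hfg hfh ↦ ?_⟩
  choose N hN hN_nf using fun w ↦ exists_isNormalForm_reflTransGen hcompat (Finsupp.single w 1)
  have normalForm_eq : ∀ u, ReflTransGen (OneStep Rw) f u → IsNormalForm Rw u →
      u = Finsupp.linearCombination k N f := fun u hfu hu ↦ calc
    u = Finsupp.linearCombination k N u := (hu.linearCombination_eq_self hN).symm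
    _ = Finsupp.linearCombination k N f :=
      (map_eq_of_reflTransGen_oneStep (fun _ _ _ _ ↦ Set.subset_univ _)
        (fun _ _ _ ↦ linearCombination_single_eq_of_rule hcompat hloc hN hN_nf)
        (Set.subset_univ _) hfu).symm
  obtain ⟨g', hg, hg'⟩ := exists_isNormalForm_reflTransGen hcompat g
  obtain ⟨h', hh, hh'⟩ := exists_isNormalForm_reflTransGen hcompat h
  obtain rfl : g' = h' :=
    (normalForm_eq g' (hfg.trans hg) hg').trans (normalForm_eq h' (hfh.trans hh) hh').symm
  exact ⟨g', hg, hh⟩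

/-- Let `Π` be a simple terminating term-rewriting system compatible with a
well-order on `W`. Then `Π` is confluent iff every basis element `w ∈ W`
(i.e. the element `1·w` of `V`) is locally confluent. -/
theorem confluent_iff_basis_locally_confluent
    {k W : Type*} [CommRing k] [IsDomain k]
    [LinearOrder W] [WellFoundedLT W]
    (Rw : W → (W →₀ k) → Prop) (hsimple : IsSimpleTRS Rw)
    (hterm : ¬ ∃ F : ℕ → (W →₀ k), ∀ n, OneStep Rw (F n) (F (n + 1)))
    (hcompat : ∀ t v, Rw t v → ∀ s ∈ v.support, s < t) :
    (∀ f g h : W →₀ k, Relation.ReflTransGen (OneStep Rw) f g →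
        Relation.ReflTransGen (OneStep Rw) f h → Joinable Rw g h) ↔
    (∀ w : W, ∀ g h : W →₀ k, OneStep Rw (Finsupp.single w 1) g →
        OneStep Rw (Finsupp.single w 1) h → Joinable Rw g h) :=
  confluent_iff_basis_locally_confluent_general Rw hcompat
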